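/- Let v : ℝ → ℝ be a continuous 2π-periodic function, and let ṽ be a function on the closed unit disc D̄ ⊂ ℝ² that is continuous on D̄, twice continuously differentiable and harmonic (vanishing Laplacian) on the open unit disc D, satisfies ṽ(cos θ, sin θ) = v(θ) for all θ, and has finite Dirichlet integral ∫_D ‖∇ṽ‖² dA < ∞. Then −(1/(4π)) ∫_D ‖∇ṽ(x,y)‖² dx dy + (1/(2π)) ∫_0^{2π} v(θ) dθ + log( (1/(2π)) ∫_0^{2π} e^{−v(θ)} dθ ) ≤ 0. -/

import Mathlib

open MeasureTheory Real

lemma mt_gronwall (x q : ℕ → ℝ) (hx : ∀ k, 0 ≤ x k) (hq : ∀ k, 0 ≤ q k)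
    (hrec : ∀ k : ℕ, ((k : ℝ) + 1) * x (k + 1) ≤
      ∑ i ∈ Finset.range (k + 1), ((i : ℝ) + 1) * q (i + 1) * x (k - i))
    (N : ℕ) (t : ℝ) (ht : 0 ≤ t) :
    ∑ k ∈ Finset.range (N + 1), x k * t ^ k ≤
      x 0 * Real.exp (∑ j ∈ Finset.range N, q (j + 1) * t ^ (j + 1)) := by
  set P : ℝ → ℝ := fun t => ∑ k ∈ Finset.range (N + 1), x k * t ^ k with hP
  set Q : ℝ → ℝ := fun t => ∑ j ∈ Finset.range N, q (j + 1) * t ^ (j + 1) with hQ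
  have hPd : ∀ t, HasDerivAt P (∑ k ∈ Finset.range N, ((k : ℝ) + 1) * x (k + 1) * t ^ k) t := by
    intro t
    have h1 : P = fun t => (∑ k ∈ Finset.range N, x (k + 1) * t ^ (k + 1)) + x 0 := by
      funext t
      simp [hP, Finset.sum_range_succ']
    rw [h1]
    refine HasDerivAt.add_const _ ?_
    refine HasDerivAt.fun_sum fun k _ => ?_
    convert! (hasDerivAt_pow (k + 1) t).const_mul (x (k + 1)) using 1
    rw [Nat.add_sub_cancel]
    push_cast
    ring
  have hQd : ∀ t, HasDerivAt Q (∑ k ∈ Finset.range N, ((k : ℝ) + 1) * q (k + 1) * t ^ k) t := by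
    intro t
    refine HasDerivAt.fun_sum fun k _ => ?_
    convert! (hasDerivAt_pow (k + 1) t).const_mul (q (k + 1)) using 1
    rw [Nat.add_sub_cancel]
    push_cast
    ring
  have key : ∀ t, 0 ≤ t → (∑ k ∈ Finset.range N, ((k : ℝ) + 1) * x (k + 1) * t ^ k) ≤
      (∑ k ∈ Finset.range N, ((k : ℝ) + 1) * q (k + 1) * t ^ k) * P t := by
    intro t ht
    calc (∑ k ∈ Finset.range N, ((k : ℝ) + 1) * x (k + 1) * t ^ k)
        ≤ ∑ k ∈ Finset.range N, ∑ i ∈ Finset.range (k + 1),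
            (((i : ℝ) + 1) * q (i + 1) * t ^ i) * (x (k - i) * t ^ (k - i)) := by
          refine Finset.sum_le_sum fun k _ => ?_
          refine (mul_le_mul_of_nonneg_right (hrec k) (pow_nonneg ht k)).trans (le_of_eq ?_)
          rw [Finset.sum_mul]
          refine Finset.sum_congr rfl fun i hi => ?_
          have : t ^ k = t ^ i * t ^ (k - i) := by
            rw [← pow_add]; congr 1; have := Finset.mem_range.1 hi; omega
          rw [this]; ring
      _ = ∑ m ∈ Finset.range N, ∑ k ∈ Finset.range (N - m),
            (((m : ℝ) + 1) * q (m + 1) * t ^ m) * (x k * t ^ k) :=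
          Finset.sum_range_diag_flip N
            (fun i j => (((i : ℝ) + 1) * q (i + 1) * t ^ i) * (x j * t ^ j))
      _ ≤ _ := by
          rw [Finset.sum_mul]
          refine Finset.sum_le_sum fun m _ => ?_
          rw [← Finset.mul_sum]
          have := hq (m + 1)
          refine mul_le_mul_of_nonneg_left ?_ (by positivity)
          refine Finset.sum_le_sum_of_subset_of_nonneg ?_ ?_
          · intro a ha
            simp only [Finset.mem_range] at ha ⊢
            omega
          · intro i _ _
            have := hx i
            positivity
  have hG : ∀ t, HasDerivAt (fun t => P t * Real.exp (-Q t)) _ t := fun t =>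
    (hPd t).mul ((hQd t).neg.exp)
  have hanti : AntitoneOn (fun t => P t * Real.exp (-Q t)) (Set.Ici 0) := by
    refine antitoneOn_of_deriv_nonpos (convex_Ici 0) ?_ ?_ ?_
    · exact fun t _ => (hG t).continuousAt.continuousWithinAt
    · exact fun t _ => (hG t).differentiableAt.differentiableWithinAt
    · intro t ht
      rw [(hG t).deriv]
      rw [interior_Ici] at ht
      have := mul_le_mul_of_nonneg_right (key t (le_of_lt ht)) (Real.exp_nonneg (-Q t))
      simp only [Pi.neg_apply] at *
      linarith
  have h0 := hanti (Set.mem_Ici.2 le_rfl) (Set.mem_Ici.2 ht) ht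
  have hP0 : P 0 = x 0 := by simp [hP, Finset.sum_range_succ']
  have hQ0 : Q 0 = 0 := by simp [hQ]
  simp only [hP0, hQ0, neg_zero, Real.exp_zero, mul_one] at h0
  calc P t = P t * Real.exp (-Q t) * Real.exp (Q t) := by
        rw [mul_assoc, ← Real.exp_add]; simp
    _ ≤ _ := mul_le_mul_of_nonneg_right h0 (Real.exp_nonneg _)

noncomputable def mtCoef (f : ℂ → ℂ) (n : ℕ) : ℂ := iteratedDeriv n f 0 / (n.factorial : ℂ)

lemma mtCoef_hasSum {f : ℂ → ℂ} (hf : DifferentiableOn ℂ f (Metric.ball 0 1)) {z : ℂ}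
    (hz : ‖z‖ < 1) : HasSum (fun n => mtCoef f n * z ^ n) (f z) := by
  have h := Complex.hasSum_taylorSeries_on_ball hf (z := z) (by simpa using hz)
  refine h.congr_fun fun n => ?_
  simp only [mtCoef, sub_zero, smul_eq_mul]
  ring

lemma mtCoef_deriv (f : ℂ → ℂ) (n : ℕ) : mtCoef (deriv f) n = (n + 1) * mtCoef f (n + 1) := by
  unfold mtCoef
  rw [iteratedDeriv_succ', Nat.factorial_succ]
  have : (n.factorial : ℂ) ≠ 0 := by exact_mod_cast n.factorial_ne_zero
  have : (n : ℂ) + 1 ≠ 0 := by exact_mod_cast n.succ_ne_zero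
  push_cast
  field_simp

lemma mtCoef_exp {A : ℂ → ℂ} (hA : DifferentiableOn ℂ A (Metric.ball 0 1)) (k : ℕ) :
    ((k : ℂ) + 1) * mtCoef (fun z => Complex.exp (A z)) (k + 1) =
      ∑ i ∈ Finset.range (k + 1), ((i : ℂ) + 1) * mtCoef A (i + 1) *
        mtCoef (fun z => Complex.exp (A z)) (k - i) := by
  have hA0 : AnalyticAt ℂ A 0 := hA.analyticAt (Metric.ball_mem_nhds _ one_pos)
  have hev : deriv (fun z => Complex.exp (A z)) =ᶠ[nhds 0]
      fun z => deriv A z * Complex.exp (A z) := by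
    filter_upwards [Metric.ball_mem_nhds (0 : ℂ) one_pos] with z hz
    have := (hA.differentiableAt (Metric.isOpen_ball.mem_nhds hz)).hasDerivAt.cexp.deriv
    rw [this, mul_comm]
  rw [← mtCoef_deriv]
  unfold mtCoef
  rw [hev.iteratedDeriv_eq, iteratedDeriv_fun_mul (hA0.deriv.contDiffAt)
    (g := fun z => Complex.exp (A z)) (hA0.cexp.contDiffAt), Finset.sum_div]
  refine Finset.sum_congr rfl fun i hi => ?_
  have hik : i ≤ k := Nat.lt_succ_iff.1 (Finset.mem_range.1 hi)
  rw [Nat.cast_choose ℂ hik, ← iteratedDeriv_succ', Nat.factorial_succ]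
  have h1 : ∀ n : ℕ, (n.factorial : ℂ) ≠ 0 := fun n => by exact_mod_cast n.factorial_ne_zero
  have h2 : (i : ℂ) + 1 ≠ 0 := by exact_mod_cast i.succ_ne_zero
  have := h1 k
  have := h1 i
  have := h1 (k - i)
  push_cast
  field_simp

lemma mt_rec {A : ℂ → ℂ} (hA : DifferentiableOn ℂ A (Metric.ball 0 1)) (k : ℕ) :
    ((k : ℝ) + 1) * ‖mtCoef (fun z => Complex.exp (A z)) (k + 1)‖ ^ 2 ≤
      ∑ i ∈ Finset.range (k + 1), ((i : ℝ) + 1) *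
        (((i + 1 : ℕ) : ℝ) * ‖mtCoef A (i + 1)‖ ^ 2) *
        ‖mtCoef (fun z => Complex.exp (A z)) (k - i)‖ ^ 2 := by
  have h := congrArg norm (mtCoef_exp hA k)
  set b := mtCoef (fun z => Complex.exp (A z))
  set a := mtCoef A
  have hk : (0 : ℝ) < (k : ℝ) + 1 := by positivity
  have h1 : ((k : ℝ) + 1) * ‖b (k + 1)‖ ≤
      ∑ i ∈ Finset.range (k + 1), ((i : ℝ) + 1) * ‖a (i + 1)‖ * ‖b (k - i)‖ := by
    have e : ∀ n : ℕ, ‖(n : ℂ) + 1‖ = (n : ℝ) + 1 := fun n => by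
      exact_mod_cast Complex.norm_natCast (n + 1)
    rw [norm_mul, e] at h
    rw [h]
    refine (norm_sum_le _ _).trans (le_of_eq ?_)
    refine Finset.sum_congr rfl fun i _ => ?_
    rw [norm_mul, norm_mul, e]
  have h2 := pow_le_pow_left₀ (by positivity) h1 2
  have h3 := h2.trans sq_sum_le_card_mul_sum_sq
  rw [Finset.card_range] at h3
  push_cast at h3 ⊢
  have h4 : ((k : ℝ) + 1) * (((k : ℝ) + 1) * ‖b (k + 1)‖ ^ 2) ≤ ((k : ℝ) + 1) *
    ∑ i ∈ Finset.range (k + 1), (((i : ℝ) + 1) * ‖a (i + 1)‖ * ‖b (k - i)‖) ^ 2 := by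
    refine le_trans (le_of_eq ?_) h3; ring
  refine (le_of_mul_le_mul_left h4 hk).trans (le_of_eq ?_)
  refine Finset.sum_congr rfl fun i _ => ?_
  ring

lemma mt_partial {A : ℂ → ℂ} (hA : DifferentiableOn ℂ A (Metric.ball 0 1)) (hA0 : A 0 = 0)
    (N : ℕ) (t : ℝ) (ht : 0 ≤ t) :
    ∑ k ∈ Finset.range (N + 1), ‖mtCoef (fun z => Complex.exp (A z)) k‖ ^ 2 * t ^ k ≤
      Real.exp (∑ j ∈ Finset.range N, ((j + 1 : ℕ) : ℝ) * ‖mtCoef A (j + 1)‖ ^ 2 * t ^ (j + 1)) := by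
  have := mt_gronwall (fun k => ‖mtCoef (fun z => Complex.exp (A z)) k‖ ^ 2)
    (fun j => (j : ℝ) * ‖mtCoef A j‖ ^ 2) (fun _ => by positivity) (fun _ => by positivity)
    (mt_rec hA) N t ht
  simpa [mtCoef, hA0] using this

lemma mt_orth (r : ℝ) (n m : ℕ) :
    ∫ θ in (0:ℝ)..(2 * π), (starRingEnd ℂ) ((r * Complex.exp (θ * Complex.I)) ^ m) *
      (r * Complex.exp (θ * Complex.I)) ^ n = if n = m then 2 * π * (r : ℂ) ^ (2 * m) else 0 := by
  have h : ∀ θ : ℝ, (starRingEnd ℂ) ((r * Complex.exp (θ * Complex.I)) ^ m) *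
      (r * Complex.exp (θ * Complex.I)) ^ n =
      (r : ℂ) ^ (n + m) * Complex.exp ((((n : ℂ) - m) * Complex.I) * θ) := by
    intro θ
    rw [map_pow, map_mul, ← Complex.exp_conj, mul_pow, mul_pow, ← Complex.exp_nat_mul,
      ← Complex.exp_nat_mul]
    simp only [Complex.conj_ofReal, map_mul, Complex.conj_I]
    rw [pow_add, show (((n : ℂ) - m) * Complex.I) * θ = m * (θ * -Complex.I) + n * (θ * Complex.I)
      by ring, Complex.exp_add]
    ring
  simp_rw [h]
  rw [intervalIntegral.integral_const_mul]
  split_ifs with hnm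
  · subst hnm
    simp
    ring
  · have hne : ((n : ℂ) - m) * Complex.I ≠ 0 := by
      refine mul_ne_zero (sub_ne_zero.2 (by exact_mod_cast hnm)) Complex.I_ne_zero
    rw [integral_exp_mul_complex hne]
    have : Complex.exp (((n : ℂ) - m) * Complex.I * ((2 * π : ℝ) : ℂ)) = 1 := by
      rw [Complex.exp_eq_one_iff]
      exact ⟨(n : ℤ) - m, by push_cast; ring⟩
    rw [this]
    simp

lemma mt_norm_circ {r : ℝ} (hr : 0 ≤ r) (θ : ℝ) : ‖(r : ℂ) * Complex.exp (θ * Complex.I)‖ = r := by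
  rw [norm_mul, Complex.norm_exp_ofReal_mul_I]; simp [abs_of_nonneg hr]

lemma mt_cont_circ {f : ℂ → ℂ} (hf : DifferentiableOn ℂ f (Metric.ball 0 1)) {r : ℝ}
    (hr : 0 ≤ r) (hr1 : r < 1) : Continuous fun θ : ℝ => f (r * Complex.exp (θ * Complex.I)) := by
  refine hf.continuousOn.comp_continuous (by fun_prop) fun θ => ?_
  rw [mem_ball_zero_iff, mt_norm_circ hr]; exact hr1

/-- termwise integration -/
lemma mt_term {f : ℂ → ℂ} (hf : DifferentiableOn ℂ f (Metric.ball 0 1)) {r : ℝ}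
    (hr : 0 ≤ r) (hr1 : r < 1) (g : ℝ → ℂ) (hg : Continuous g) :
    HasSum (fun n => ∫ θ in (0:ℝ)..(2 * π), g θ * (mtCoef f n *
      (r * Complex.exp (θ * Complex.I)) ^ n))
      (∫ θ in (0:ℝ)..(2 * π), g θ * f (r * Complex.exp (θ * Complex.I))) := by
  have hs : Summable fun n => ‖mtCoef f n‖ * r ^ n := by
    have := (mtCoef_hasSum hf (z := r) (by simpa [abs_of_nonneg hr] using hr1)).summable.norm
    simpa [abs_of_nonneg hr] using this
  refine intervalIntegral.hasSum_integral_of_dominated_convergence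
    (fun n θ => ‖g θ‖ * (‖mtCoef f n‖ * r ^ n)) ?_ ?_ ?_ ?_ ?_
  · intro n
    exact Continuous.aestronglyMeasurable (by fun_prop)
  · intro n
    refine Filter.Eventually.of_forall fun θ _ => ?_
    rw [norm_mul, norm_mul, norm_pow, mt_norm_circ hr]
  · exact Filter.Eventually.of_forall fun θ _ => hs.mul_left _
  · simp_rw [tsum_mul_left]
    exact Continuous.intervalIntegrable (by fun_prop) _ _
  · refine Filter.Eventually.of_forall fun θ _ => ?_
    exact (mtCoef_hasSum hf (by rwa [mt_norm_circ hr])).mul_left _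

lemma mt_parseval {f : ℂ → ℂ} (hf : DifferentiableOn ℂ f (Metric.ball 0 1)) {r : ℝ}
    (hr : 0 ≤ r) (hr1 : r < 1) :
    HasSum (fun n => 2 * π * (‖mtCoef f n‖ ^ 2 * (r ^ 2) ^ n))
      (∫ θ in (0:ℝ)..(2 * π), ‖f (r * Complex.exp (θ * Complex.I))‖ ^ 2) := by
  have hfc := mt_cont_circ hf hr hr1
  have h1 : ∀ m, ∫ θ in (0:ℝ)..(2 * π), (starRingEnd ℂ) ((r * Complex.exp (θ * Complex.I)) ^ m) *
      f (r * Complex.exp (θ * Complex.I)) = mtCoef f m * (2 * π * (r : ℂ) ^ (2 * m)) := by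
    intro m
    have h := mt_term hf hr hr1 (fun θ => (starRingEnd ℂ) ((r * Complex.exp (θ * Complex.I)) ^ m))
      (by fun_prop)
    refine h.unique ?_
    have e : ∀ n, (∫ θ in (0:ℝ)..(2 * π), (starRingEnd ℂ) ((r * Complex.exp (θ * Complex.I)) ^ m) *
        (mtCoef f n * (r * Complex.exp (θ * Complex.I)) ^ n)) =
        if n = m then mtCoef f m * (2 * π * (r : ℂ) ^ (2 * m)) else 0 := by
      intro n
      simp_rw [mul_left_comm _ (mtCoef f n)]
      rw [intervalIntegral.integral_const_mul, mt_orth]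
      split_ifs with hh
      · rw [hh]
      · simp
    simp_rw [e]
    exact hasSum_ite_eq m _
  have h2 := mt_term hf hr hr1 (fun θ => (starRingEnd ℂ) (f (r * Complex.exp (θ * Complex.I))))
    (Complex.continuous_conj.comp hfc)
  have e : ∀ n, (∫ θ in (0:ℝ)..(2 * π), (starRingEnd ℂ) (f (r * Complex.exp (θ * Complex.I))) *
        (mtCoef f n * (r * Complex.exp (θ * Complex.I)) ^ n)) =
        ((2 * π * (‖mtCoef f n‖ ^ 2 * (r ^ 2) ^ n) : ℝ) : ℂ) := by
    intro n
    have h3 : ∀ θ : ℝ, (starRingEnd ℂ) (f (r * Complex.exp (θ * Complex.I))) *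
        (mtCoef f n * (r * Complex.exp (θ * Complex.I)) ^ n) = mtCoef f n * (starRingEnd ℂ)
        ((starRingEnd ℂ) ((r * Complex.exp (θ * Complex.I)) ^ n) *
      f (r * Complex.exp (θ * Complex.I))) := by
      intro θ
      rw [map_mul, Complex.conj_conj]; ring
    simp_rw [h3]
    rw [intervalIntegral.integral_const_mul, intervalIntegral.intervalIntegral_conj, h1, map_mul, ← mul_assoc,
      Complex.mul_conj']
    simp [pow_mul, Complex.conj_ofNat]
    ring
  have e2 : (∫ θ in (0:ℝ)..(2 * π), (starRingEnd ℂ) (f (r * Complex.exp (θ * Complex.I))) *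
      f (r * Complex.exp (θ * Complex.I))) =
      ((∫ θ in (0:ℝ)..(2 * π), ‖f (r * Complex.exp (θ * Complex.I))‖ ^ 2 : ℝ) : ℂ) := by
    rw [← intervalIntegral.integral_ofReal]
    simp_rw [Complex.conj_mul']
    simp
  simp_rw [e] at h2
  rw [e2] at h2
  exact_mod_cast h2

lemma mt_dirichlet {A : ℂ → ℂ} (hA : DifferentiableOn ℂ A (Metric.ball 0 1)) (φ : ℂ → ℝ)
    (hφ : IntegrableOn φ (Metric.ball 0 1) volume) 
    (hle : ∀ z ∈ Metric.ball (0 : ℂ) 1, ‖deriv A z‖ ^ 2 ≤ φ z) (N : ℕ) :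
    ∑ j ∈ Finset.range N, ((j + 1 : ℕ) : ℝ) * ‖mtCoef A (j + 1)‖ ^ 2 ≤
      (1 / π) * ∫ z in Metric.ball 0 1, φ z := by
  have hA' : DifferentiableOn ℂ (deriv A) (Metric.ball 0 1) := hA.deriv Metric.isOpen_ball
  set S := ∑ j ∈ Finset.range N, ((j + 1 : ℕ) : ℝ) * ‖mtCoef A (j + 1)‖ ^ 2 with hS
  set p : ℝ → ℝ := fun ρ => ρ * ∑ j ∈ Finset.range N,
    2 * π * (‖mtCoef (deriv A) j‖ ^ 2 * (ρ ^ 2) ^ j) with hp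
  have hpS : ∫ ρ in (0:ℝ)..1, p ρ = π * S := by
    have e : ∀ ρ, p ρ = ∑ j ∈ Finset.range N,
        (2 * π * ‖mtCoef (deriv A) j‖ ^ 2) * ρ ^ (2 * j + 1) := by
      intro ρ
      rw [hp]
      simp only [Finset.mul_sum]
      refine Finset.sum_congr rfl fun j _ => ?_
      rw [pow_succ ρ (2 * j), pow_mul]; ring
    simp_rw [e]
    rw [intervalIntegral.integral_finsetSum
      (fun i _ => Continuous.intervalIntegrable (by fun_prop) _ _), hS, Finset.mul_sum]
    refine Finset.sum_congr rfl fun j _ => ?_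
    rw [intervalIntegral.integral_const_mul, integral_pow, mtCoef_deriv, norm_mul]
    have e : ‖(j : ℂ) + 1‖ = (j : ℝ) + 1 := by
      exact_mod_cast Complex.norm_natCast (j + 1)
    rw [e]
    push_cast
    have : (j : ℝ) + 1 ≠ 0 := by positivity
    field_simp
    simp
    ring
  -- circle bound
  have hcirc : ∀ ρ ∈ Set.Ioo (0 : ℝ) 1, ENNReal.ofReal (p ρ) ≤
      ∫⁻ θ in Set.Ioo (-π) π, ENNReal.ofReal ρ *
        ENNReal.ofReal (‖deriv A (ρ * Complex.exp (θ * Complex.I))‖ ^ 2) := by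
    intro ρ hρ
    have hc := mt_cont_circ hA' hρ.1.le hρ.2
    have hc2 : Continuous fun θ : ℝ => ‖deriv A (ρ * Complex.exp (θ * Complex.I))‖ ^ 2 := by
      fun_prop
    have hb : ∑ j ∈ Finset.range N, 2 * π * (‖mtCoef (deriv A) j‖ ^ 2 * (ρ ^ 2) ^ j) ≤
        ∫ θ in (0:ℝ)..(2 * π), ‖deriv A (ρ * Complex.exp (θ * Complex.I))‖ ^ 2 :=
      sum_le_hasSum _ (fun _ _ => by positivity) (mt_parseval hA' hρ.1.le hρ.2)
    have hper : Function.Periodic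
        (fun θ : ℝ => ‖deriv A (ρ * Complex.exp (θ * Complex.I))‖ ^ 2) (2 * π) := by
      intro θ
      have : Complex.exp (((θ + 2 * π : ℝ) : ℂ) * Complex.I) = Complex.exp (θ * Complex.I) := by
        push_cast
        rw [add_mul, Complex.exp_add, Complex.exp_two_pi_mul_I, mul_one]
      simp only [this]
    have hshift := hper.intervalIntegral_add_eq 0 (-π)
    rw [zero_add, show -π + 2 * π = π by ring] at hshift
    rw [hshift, intervalIntegral.integral_of_le (by linarith [pi_pos]),
      integral_Ioc_eq_integral_Ioo] at hb
    have hinteg : IntegrableOn (fun θ : ℝ => ‖deriv A (ρ * Complex.exp (θ * Complex.I))‖ ^ 2)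
        (Set.Ioo (-π) π) := (hc2.integrableOn_Icc).mono_set Set.Ioo_subset_Icc_self
    rw [lintegral_const_mul' _ _ ENNReal.ofReal_ne_top,
      ← ofReal_integral_eq_lintegral_ofReal hinteg
        (Filter.Eventually.of_forall fun _ => by positivity), ← ENNReal.ofReal_mul hρ.1.le]
    exact ENNReal.ofReal_le_ofReal (mul_le_mul_of_nonneg_left hb hρ.1.le)
  set F : ℂ → ENNReal := (Metric.ball (0 : ℂ) 1).indicator
    (fun z => ENNReal.ofReal (‖deriv A z‖ ^ 2)) with hF
  have hFm : Measurable F := by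
    refine Measurable.indicator ?_ Metric.isOpen_ball.measurableSet
    exact ((measurable_deriv A).norm.pow_const 2).ennreal_ofReal
  have hpolar := Complex.lintegral_comp_polarCoord_symm F
  have hm : Measurable (fun p : ℝ × ℝ => ENNReal.ofReal p.1 • F (Complex.polarCoord.symm p)) := by
    have : Measurable fun p : ℝ × ℝ => Complex.polarCoord.symm p := by
      simp only [Complex.polarCoord_symm_apply]
      fun_prop
    simp only [smul_eq_mul]
    exact (measurable_fst.ennreal_ofReal).mul (hFm.comp this)
  rw [polarCoord_target, Measure.volume_eq_prod, ← Measure.prod_restrict,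
    lintegral_prod _ hm.aemeasurable] at hpolar
  have h1 : ENNReal.ofReal (π * S) ≤ ∫⁻ z, F z := by
    rw [← hpolar, ← hpS, intervalIntegral.integral_of_le zero_le_one,
      integral_Ioc_eq_integral_Ioo]
    have hpc : Continuous p := by fun_prop
    rw [ofReal_integral_eq_lintegral_ofReal (hpc.integrableOn_Icc.mono_set Set.Ioo_subset_Icc_self)]
    · refine le_trans ?_ (lintegral_mono_set (s := Set.Ioo 0 1) Set.Ioo_subset_Ioi_self)
      refine setLIntegral_mono' measurableSet_Ioo fun ρ hρ => ?_
      refine (hcirc ρ hρ).trans (le_of_eq ?_)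
      refine lintegral_congr fun θ => ?_
      have e : (Complex.polarCoord.symm (ρ, θ)) = ρ * Complex.exp (θ * Complex.I) := by
        rw [Complex.polarCoord_symm_apply, Complex.exp_mul_I]
        simp
      have e2 : (ρ : ℂ) * Complex.exp (θ * Complex.I) ∈ Metric.ball (0 : ℂ) 1 := by
        rw [mem_ball_zero_iff, mt_norm_circ hρ.1.le]; exact hρ.2
      rw [e, hF, Set.indicator_of_mem e2, smul_eq_mul]
    · refine (ae_restrict_iff' measurableSet_Ioo).2 (Filter.Eventually.of_forall fun ρ hρ => ?_)
      have := hρ.1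
      simp only [hp, Pi.zero_apply]
      positivity
  have h2 : ∫⁻ z, F z ≤ ENNReal.ofReal (∫ z in Metric.ball 0 1, φ z) := by
    rw [ofReal_integral_eq_lintegral_ofReal hφ, hF,
      lintegral_indicator Metric.isOpen_ball.measurableSet]
    · exact setLIntegral_mono' Metric.isOpen_ball.measurableSet
        fun z hz => ENNReal.ofReal_le_ofReal (hle z hz)
    · refine (ae_restrict_iff' Metric.isOpen_ball.measurableSet).2
        (Filter.Eventually.of_forall fun z hz => ?_)
      exact (sq_nonneg _).trans (hle z hz)
  have h3 : 0 ≤ ∫ z in Metric.ball 0 1, φ z :=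
    setIntegral_nonneg Metric.isOpen_ball.measurableSet
      fun z hz => (sq_nonneg _).trans (hle z hz)
  have h4 := (ENNReal.ofReal_le_ofReal_iff h3).1 (h1.trans h2)
  rw [one_div, inv_mul_eq_div, le_div_iff₀ pi_pos]
  linarith

lemma mt_interior {A : ℂ → ℂ} (hA : DifferentiableOn ℂ A (Metric.ball 0 1)) (hA0 : A 0 = 0)
    (φ : ℂ → ℝ) (hφ : IntegrableOn φ (Metric.ball 0 1) volume)
    (hle : ∀ z ∈ Metric.ball (0 : ℂ) 1, ‖deriv A z‖ ^ 2 ≤ φ z) {r : ℝ}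
    (hr : 0 ≤ r) (hr1 : r < 1) :
    ∫ θ in (0:ℝ)..(2 * π), Real.exp (2 * (A (r * Complex.exp (θ * Complex.I))).re) ≤
      2 * π * Real.exp ((1 / π) * ∫ z in Metric.ball 0 1, φ z) := by
  have hE : DifferentiableOn ℂ (fun z => Complex.exp (A z)) (Metric.ball 0 1) := hA.cexp
  have h := mt_parseval hE hr hr1
  have e : ∀ z : ℂ, ‖Complex.exp z‖ ^ 2 = Real.exp (2 * z.re) := fun z => by
    rw [Complex.norm_exp, ← Real.exp_nat_mul]; norm_num
  simp_rw [e] at h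
  refine le_of_tendsto h.tendsto_sum_nat (Filter.Eventually.of_forall fun N => ?_)
  rw [← Finset.mul_sum]
  refine mul_le_mul_of_nonneg_left ?_ (by positivity)
  refine le_trans (Finset.sum_le_sum_of_subset_of_nonneg (Finset.range_mono (Nat.le_succ N))
    fun _ _ _ => by positivity) ((mt_partial hA hA0 N (r ^ 2) (by positivity)).trans ?_)
  refine Real.exp_le_exp.2 (le_trans ?_ (mt_dirichlet hA φ hφ hle N))
  refine Finset.sum_le_sum fun j _ => ?_
  refine mul_le_of_le_one_right (by positivity) (pow_le_one₀ (by positivity) ?_)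
  exact pow_le_one₀ hr hr1.le

theorem moser_trudinger_circle
    (v : ℝ → ℝ) (hv : Continuous v) (hper : Function.Periodic v (2 * π))
    (vtilde : ℂ → ℝ)
    (hcont : ContinuousOn vtilde {z : ℂ | ‖z‖ ≤ 1})
    (hC2 : ContDiffOn ℝ 2 vtilde {z : ℂ | ‖z‖ < 1})
    (hharm : ∀ z : ℂ, ‖z‖ < 1 →
      fderiv ℝ (fun w => fderiv ℝ vtilde w 1) z 1
        + fderiv ℝ (fun w => fderiv ℝ vtilde w Complex.I) z Complex.I = 0)
    (hbdry : ∀ θ : ℝ, vtilde (Complex.exp (θ * Complex.I)) = v θ)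
    (hdir : IntegrableOn (fun z => ‖fderiv ℝ vtilde z‖ ^ 2) {z : ℂ | ‖z‖ < 1} volume) :
    -(1 / (4 * π)) * (∫ z in {z : ℂ | ‖z‖ < 1}, ‖fderiv ℝ vtilde z‖ ^ 2)
      + (1 / (2 * π)) * (∫ θ in (0:ℝ)..(2 * π), v θ)
      + Real.log ((1 / (2 * π)) * ∫ θ in (0:ℝ)..(2 * π), Real.exp (-v θ)) ≤ 0 := by
  have hball : {z : ℂ | ‖z‖ < 1} = Metric.ball 0 1 := by ext z; simp
  rw [hball] at hC2 hdir ⊢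
  have hopen : ∀ z ∈ Metric.ball (0 : ℂ) 1, Metric.ball (0 : ℂ) 1 ∈ nhds z :=
    fun z hz => Metric.isOpen_ball.mem_nhds hz
  have hharmonic : InnerProductSpace.HarmonicOnNhd vtilde (Metric.ball 0 1) := by
    intro z hz
    refine ⟨hC2.contDiffAt (hopen z hz), ?_⟩
    filter_upwards [hopen z hz] with w hw
    rw [InnerProductSpace.laplacian_eq_iteratedFDeriv_complexPlane]
    have hd : DifferentiableAt ℝ (fderiv ℝ vtilde) w :=
      ((hC2.contDiffAt (hopen w hw)).fderiv_right (m := 1) (by norm_num)).differentiableAt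
        (by norm_num)
    have := hharm w (by simpa using hw)
    simp only [iteratedFDeriv_two_apply]
    rw [fderiv_clm_apply hd (differentiableAt_const _),
      fderiv_clm_apply hd (differentiableAt_const _)] at this
    simpa using this
  have hcont' : ContinuousOn vtilde (closure (Metric.ball 0 1)) := by
    rw [closure_ball _ one_ne_zero]
    refine hcont.mono fun z hz => ?_
    simpa using hz
  have hmean : (1 / (2 * π)) * (∫ θ in (0:ℝ)..(2 * π), v θ) = vtilde 0 := by
    have := InnerProductSpace.HarmonicContOnCl.circleAverage_eq (c := 0) (R := 1) (f := vtilde)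
      (by rw [abs_one]; exact ⟨hharmonic, hcont'⟩)
    rw [← this, circleAverage_def]
    simp [circleMap, hbdry]
  obtain ⟨F, hFan, hFre⟩ := hharmonic.exists_analyticOnNhd_ball_re_eq
  have hFd : DifferentiableOn ℂ F (Metric.ball 0 1) := hFan.differentiableOn
  have h0mem : (0 : ℂ) ∈ Metric.ball (0 : ℂ) 1 := by simp
  set A : ℂ → ℂ := fun z => -(1 / 2) * (F z - F 0) with hAdef
  have hA : DifferentiableOn ℂ A (Metric.ball 0 1) := (hFd.sub_const _).const_mul _
  have hA0 : A 0 = 0 := by simp [hAdef]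
  have hle : ∀ z ∈ Metric.ball (0 : ℂ) 1, ‖deriv A z‖ ^ 2 ≤ 1 / 4 * ‖fderiv ℝ vtilde z‖ ^ 2 := by
    intro z hz
    have hFz : HasDerivAt F (deriv F z) z := (hFd.differentiableAt (hopen z hz)).hasDerivAt
    have h1 : deriv A z = -(1 / 2) * deriv F z := ((hFz.sub_const _).const_mul _).deriv
    have h2 : HasFDerivAt vtilde (Complex.reCLM.comp
        ((ContinuousLinearMap.toSpanSingleton ℂ (deriv F z)).restrictScalars ℝ)) z := by
      have h3 := Complex.reCLM.hasFDerivAt.comp z (hFz.hasFDerivAt.restrictScalars ℝ)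
      refine h3.congr_of_eventuallyEq ?_
      filter_upwards [hopen z hz] with w hw
      exact (hFre hw).symm
    have h4 : ‖deriv F z‖ ≤ ‖fderiv ℝ vtilde z‖ := by
      rcases eq_or_ne (deriv F z) 0 with h0 | h0
      · rw [h0, norm_zero]; positivity
      have h5 := (fderiv ℝ vtilde z).le_opNorm ((starRingEnd ℂ) (deriv F z))
      have h6 : fderiv ℝ vtilde z ((starRingEnd ℂ) (deriv F z)) = ‖deriv F z‖ ^ 2 := by
        rw [h2.fderiv]
        simp only [ContinuousLinearMap.comp_apply, ContinuousLinearMap.coe_restrictScalars',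
          ContinuousLinearMap.toSpanSingleton_apply, smul_eq_mul, Complex.conj_mul']
        rw [Complex.reCLM_apply]
        exact_mod_cast Complex.ofReal_re _
      rw [h6, RCLike.norm_conj, norm_pow, norm_norm, sq] at h5
      exact le_of_mul_le_mul_right h5 (norm_pos_iff.2 h0)
    rw [h1, norm_mul, mul_pow]
    have h7 := pow_le_pow_left₀ (norm_nonneg _) h4 2
    have h8 : ‖(-(1 / 2) : ℂ)‖ ^ 2 = 1 / 4 := by norm_num
    rw [h8]
    linarith
  have hinteg := hdir.const_mul (1 / 4)
  set D := ∫ z in Metric.ball 0 1, ‖fderiv ℝ vtilde z‖ ^ 2 with hD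
  have hmain : ∀ r : ℝ, 0 ≤ r → r < 1 →
      ∫ θ in (0:ℝ)..(2 * π), Real.exp (-vtilde (r * Complex.exp (θ * Complex.I))) ≤
        2 * π * Real.exp (1 / (4 * π) * D - vtilde 0) := by
    intro r hr hr1
    have h := mt_interior hA hA0 _ hinteg hle hr hr1
    rw [integral_const_mul, ← hD] at h
    have e : ∀ θ : ℝ, Real.exp (-vtilde (r * Complex.exp (θ * Complex.I))) =
        Real.exp (-vtilde 0) * Real.exp (2 * (A (r * Complex.exp (θ * Complex.I))).re) := by
      intro θ
      have e2 : (r : ℂ) * Complex.exp (θ * Complex.I) ∈ Metric.ball (0 : ℂ) 1 := by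
        rw [mem_ball_zero_iff, mt_norm_circ hr]; exact hr1
      rw [← hFre e2, ← hFre h0mem, ← Real.exp_add]
      congr 1
      simp [hAdef]
      ring
    simp_rw [e]
    rw [intervalIntegral.integral_const_mul]
    refine (mul_le_mul_of_nonneg_left h (Real.exp_nonneg _)).trans (le_of_eq ?_)
    rw [mul_left_comm, ← Real.exp_add]
    congr 2
    field_simp
    ring
  have hlim : ∫ θ in (0:ℝ)..(2 * π), Real.exp (-v θ) ≤
      2 * π * Real.exp (1 / (4 * π) * D - vtilde 0) := by
    set c : ℝ → ℝ := fun r => max 0 (min r 1) with hc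
    have hcc : Continuous c := by fun_prop
    have hG : Continuous fun r => ∫ θ in (0:ℝ)..(2 * π),
        Real.exp (-vtilde (c r * Complex.exp (θ * Complex.I))) := by
      refine intervalIntegral.continuous_parametric_intervalIntegral_of_continuous'
        (f := fun r θ => Real.exp (-vtilde (c r * Complex.exp (θ * Complex.I)))) ?_ _ _
      refine Real.continuous_exp.comp (Continuous.neg ?_)
      refine hcont.comp_continuous (by fun_prop) fun p => ?_
      rw [Set.mem_ofPred_eq, mt_norm_circ (le_max_left _ _)]
      exact max_le zero_le_one (min_le_right _ _)
    have hc1 : c 1 = 1 := by simp [hc]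
    have ht := (hG.tendsto 1).mono_left (nhdsWithin_le_nhds (s := Set.Iio 1))
    simp only [hc1, Complex.ofReal_one, one_mul, hbdry] at ht
    refine le_of_tendsto ht ?_
    filter_upwards [self_mem_nhdsWithin] with r hr
    exact hmain (c r) (le_max_left _ _) (max_lt one_pos (min_lt_of_left_lt hr))
  have hpos : 0 < ∫ θ in (0:ℝ)..(2 * π), Real.exp (-v θ) :=
    intervalIntegral.intervalIntegral_pos_of_pos (Continuous.intervalIntegrable (by fun_prop) _ _)
      (fun _ => Real.exp_pos _) (by positivity)
  have hlog : Real.log ((1 / (2 * π)) * ∫ θ in (0:ℝ)..(2 * π), Real.exp (-v θ)) ≤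
      1 / (4 * π) * D - vtilde 0 := by
    rw [Real.log_le_iff_le_exp (by positivity), one_div, inv_mul_le_iff₀ (by positivity)]
    exact hlim
  rw [hmean]
  linarith
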